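/- arXiv:2312.15723 — 5 statements merged into one kernel-verified Lean document; each statement's English description precedes it below -/
import Mathlib

section
/- Let X be a real normed space, N ∈ ℕ with N ≥ 1, and δ_1, …, δ_N ∈ X. Then (1/2) Σ_{i=1}^{N−1} ‖δ_i‖_X² + ‖δ_N‖_X² ≤ (9/4) ‖δ_1‖_X² + 2 Σ_{i=2}^N ‖(3/2)δ_i − (1/2)δ_{i−1}‖_X². -/
/-!
Passing from `n` to `n + 1` increases the left-hand side by `‖δ_{n+1}‖² - ‖δ_n‖² / 2` and the
right-hand side by `2 ‖(3/2) δ_{n+1} - (1/2) δ_n‖²`, so by induction it is enough to compare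
these two increments, which is `double_step_increment`.
-/

/-- The triangle inequality gives `‖y‖ ≤ (2d + ‖x‖) / 3` with `d = ‖(3/2) y - (1/2) x‖`;
squaring and using `2 d ‖x‖ ≤ d² + ‖x‖²` yields even `‖y‖² ≤ (2 d² + ‖x‖²) / 3`. -/
lemma double_step_increment {X : Type*} [NormedAddCommGroup X] [NormedSpace ℝ X] (x y : X) :
    ‖y‖ ^ 2 ≤ (1 / 2 : ℝ) * ‖x‖ ^ 2 + 2 * ‖(3 / 2 : ℝ) • y - (1 / 2 : ℝ) • x‖ ^ 2 := by
  have h := norm_sub_norm_le ((3 / 2 : ℝ) • y) ((1 / 2 : ℝ) • x)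
  rw [norm_smul, norm_smul, Real.norm_of_nonneg (by norm_num : (0 : ℝ) ≤ 3 / 2),
    Real.norm_of_nonneg (by norm_num : (0 : ℝ) ≤ 1 / 2)] at h
  generalize ‖(3 / 2 : ℝ) • y - (1 / 2 : ℝ) • x‖ = d at *
  have hy : ‖y‖ ≤ (2 * d + ‖x‖) / 3 := by linarith
  have hsq := pow_le_pow_left₀ (norm_nonneg y) hy 2
  nlinarith [sq_nonneg (d - ‖x‖), sq_nonneg d, sq_nonneg ‖x‖]

/-- Refined double-step difference estimate with explicit constants: for a real normed
space `X`, `N ≥ 1` and `δ_1, …, δ_N ∈ X`,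
`(1/2) Σ_{i=1}^{N−1} ‖δ_i‖² + ‖δ_N‖² ≤ (9/4)‖δ_1‖² + 2 Σ_{i=2}^N ‖(3/2)δ_i − (1/2)δ_{i−1}‖²`. -/
theorem double_step_sum_refined {X : Type*} [NormedAddCommGroup X] [NormedSpace ℝ X]
    (N : ℕ) (hN : 1 ≤ N) (δ : ℕ → X) :
    (1 / 2 : ℝ) * ∑ i ∈ Finset.Icc 1 (N - 1), ‖δ i‖ ^ 2 + ‖δ N‖ ^ 2 ≤
      (9 / 4 : ℝ) * ‖δ 1‖ ^ 2 +
        2 * ∑ i ∈ Finset.Icc 2 N, ‖(3 / 2 : ℝ) • δ i - (1 / 2 : ℝ) • δ (i - 1)‖ ^ 2 := by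
  induction N, hN using Nat.le_induction with
  | base =>
    simp
    nlinarith [sq_nonneg ‖δ 1‖]
  | succ n hn ih =>
    have hinc := double_step_increment (δ n) (δ (n + 1))
    obtain ⟨m, rfl⟩ : ∃ m, n = m + 1 := ⟨n - 1, by omega⟩
    rw [Finset.sum_Icc_succ_top (by omega : 2 ≤ m + 1 + 1)]
    simp only [Nat.add_sub_cancel] at ih ⊢
    rw [Finset.sum_Icc_succ_top (by omega : 1 ≤ m + 1)]
    linarith
end

section
/- Let V, Z, H, U be real Banach spaces, let ι₁ : V → Z be a compact linear operator, let e : Z → H be an injective continuous linear operator, and let ι₂ : Z → U be a continuous linear operator; set ι = ι₂ ∘ ι₁. Then for every ε > 0 there exists a constant c_ι(ε) > 0 such that ‖ι u‖_U ≤ ε ‖u‖_V + c_ι(ε) ‖e(ι₁ u)‖_H for all u ∈ V. -/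
/-!
By homogeneity it suffices to bound `‖ι₂ z‖ ≤ ε + c * ‖e z‖` on the compact closure `K` of the
`ι₁`-image of the unit ball. Where `‖ι₂ z‖ < ε` this is trivial. The remaining part
`{z ∈ K | ε ≤ ‖ι₂ z‖}` is compact and misses `0`, so by injectivity of `e` the quotient
`‖ι₂ z‖ / ‖e z‖` is continuous there, hence bounded, and any positive upper bound serves as `c`.
-/

/-- Ehrling-type estimate for the composed embedding `ι = ι₂ ∘ ι₁`: if `ι₁ : V → Z` is a
compact linear operator, `e : Z → H` is an injective continuous linear operator and
`ι₂ : Z → U` is a continuous linear operator, then for every `ε > 0` there is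
`c_ι(ε) > 0` with `‖ι u‖_U ≤ ε ‖u‖_V + c_ι(ε) ‖e (ι₁ u)‖_H` for all `u ∈ V`. -/
theorem ehrling_composed
    {V Z H U : Type*}
    [NormedAddCommGroup V] [NormedSpace ℝ V] [CompleteSpace V]
    [NormedAddCommGroup Z] [NormedSpace ℝ Z] [CompleteSpace Z]
    [NormedAddCommGroup H] [NormedSpace ℝ H] [CompleteSpace H]
    [NormedAddCommGroup U] [NormedSpace ℝ U] [CompleteSpace U]
    (ι₁ : V →L[ℝ] Z) (e : Z →L[ℝ] H) (ι₂ : Z →L[ℝ] U)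
    (hι₁ : ∀ s : Set V, Bornology.IsBounded s → IsCompact (closure (ι₁ '' s)))
    (he : Function.Injective e) :
    ∀ ε > 0, ∃ c > 0, ∀ u : V, ‖ι₂ (ι₁ u)‖ ≤ ε * ‖u‖ + c * ‖e (ι₁ u)‖ := by
  intro ε hε
  set K : Set Z := closure (ι₁ '' Metric.closedBall 0 1) with hK
  have hKc : IsCompact K := hι₁ _ Metric.isBounded_closedBall
  have hK'c : IsCompact (K ∩ {z | ε ≤ ‖ι₂ z‖}) :=
    hKc.inter_right (isClosed_le continuous_const (by fun_prop))
  have hne : ∀ z ∈ K ∩ {z | ε ≤ ‖ι₂ z‖}, ‖e z‖ ≠ 0 := by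
    rintro z ⟨-, hz⟩ h0
    have hz0 : z = 0 := he (by rw [norm_eq_zero.mp h0, map_zero])
    rw [Set.mem_ofPred_eq, hz0, map_zero, norm_zero] at hz
    exact hε.not_ge hz
  have hcont : ContinuousOn (fun z => ‖ι₂ z‖ / ‖e z‖) (K ∩ {z | ε ≤ ‖ι₂ z‖}) :=
    ContinuousOn.div (by fun_prop) (by fun_prop) hne
  obtain ⟨C, hC⟩ := hK'c.bddAbove_image hcont
  have hcpos : 0 < max C 1 := lt_max_of_lt_right one_pos
  refine ⟨max C 1, hcpos, ?_⟩
  have key : ∀ z ∈ K, ‖ι₂ z‖ ≤ ε + max C 1 * ‖e z‖ := by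
    intro z hz
    rcases le_total ‖ι₂ z‖ ε with h | h
    · exact h.trans (le_add_of_nonneg_right (by positivity))
    · have hq : ‖ι₂ z‖ / ‖e z‖ ≤ max C 1 :=
        (hC (Set.mem_image_of_mem _ ⟨hz, h⟩)).trans (le_max_left _ _)
      have hpos : 0 < ‖e z‖ := (norm_nonneg _).lt_of_ne' (hne z ⟨hz, h⟩)
      exact ((div_le_iff₀ hpos).mp hq).trans (le_add_of_nonneg_left hε.le)
  intro u
  rcases eq_or_ne u 0 with rfl | hu
  · simp
  · have hupos : 0 < ‖u‖ := norm_pos_iff.mpr hu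
    have h := key (ι₁ (‖u‖⁻¹ • u)) (subset_closure (Set.mem_image_of_mem _ (by
      simp [norm_smul, hupos.ne'])))
    simp only [map_smul, norm_smul, norm_inv, norm_norm] at h
    -- Undo the normalization of `u` by multiplying through by `‖u‖`.
    calc ‖ι₂ (ι₁ u)‖ = ‖u‖ * (‖u‖⁻¹ * ‖ι₂ (ι₁ u)‖) := by field_simp
      _ ≤ ‖u‖ * (ε + max C 1 * (‖u‖⁻¹ * ‖e (ι₁ u)‖)) := by gcongr
      _ = ε * ‖u‖ + max C 1 * ‖e (ι₁ u)‖ := by field_simp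
end

section
/- Let X be a real normed space, τ > 0, N ∈ ℕ with N ≥ 2, and let u_0, u_1, …, u_N and w_2, …, w_N in X satisfy u_n = (2/3)(τ w_n + 2u_{n−1} − (1/2)u_{n−2}) for n = 2, …, N. Write S̄_m = (2/3) τ Σ_{k=2}^m ‖w_k‖ for 2 ≤ m ≤ N. Then for every n with 2 ≤ n ≤ N: ‖u_n‖ ≤ (3/2)(1 − (1/3)^{n−1}) S̄_n + (1/2)(3 − (1/3)^{n−1}) ‖u_1‖ + (1/2)(1 − (1/3)^{n−1}) ‖u_0‖. -/
/-!
With `d_n = u_n - u_{n-1}` the recurrence reads `d_n = (1/3) d_{n-1} + (2/3) τ w_n`, so for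
every real `a`
`u_n + a d_n = u_{n-1} + ((1 + a) / 3) d_{n-1} + (1 + a) (2/3) τ w_n`.
The map `a ↦ (1 + a) / 3` sends `a_j = (1 - 3^{-j}) / 2` to `a_{j+1}`, and
`1 + a_j = (3/2) (1 - 3^{-(j+1)})` increases with `j`. Descending from `u_n = u_n + a_0 d_n` to
`u_1 + a_{n-1} d_1` (`bdf2_descent`) therefore collects every `w_k` with a factor at most
`(3/2) (1 - 3^{-(n-1)})`, and the triangle inequality is applied to `u_1 + a_{n-1} (u_1 - u_0)`.
-/

/-- The bound for the combination `u_{m+1} + a_j (u_{m+1} - u_m)`, `a_j = (1 - 3^{-j}) / 2`.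
The index `j` is free so that induction on `m` can replace `j` by `j + 1`. -/
lemma bdf2_descent {X : Type*} [NormedAddCommGroup X] [NormedSpace ℝ X]
    (τ : ℝ) (hτ : 0 < τ) (N : ℕ) (u w : ℕ → X)
    (hrec : ∀ n, 2 ≤ n → n ≤ N →
      u n = (2 / 3 : ℝ) • (τ • w n + (2 : ℝ) • u (n - 1) - (1 / 2 : ℝ) • u (n - 2)))
    (m : ℕ) : ∀ j : ℕ, m + 1 ≤ N →
      ‖u (m + 1) + ((1 - (1 / 3 : ℝ) ^ j) / 2) • (u (m + 1) - u m)‖ ≤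
        (3 / 2 : ℝ) * (1 - (1 / 3 : ℝ) ^ (j + m)) *
            ((2 / 3 : ℝ) * τ * ∑ k ∈ Finset.Icc 2 (m + 1), ‖w k‖)
          + ‖u 1 + ((1 - (1 / 3 : ℝ) ^ (j + m)) / 2) • (u 1 - u 0)‖ := by
  induction m with
  | zero => intro j _; simp
  | succ m ih =>
    intro j hm
    have hstep : u (m + 1 + 1) + ((1 - (1 / 3 : ℝ) ^ j) / 2) • (u (m + 1 + 1) - u (m + 1))
        = (u (m + 1) + ((1 - (1 / 3 : ℝ) ^ (j + 1)) / 2) • (u (m + 1) - u m))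
          + ((3 / 2 : ℝ) * (1 - (1 / 3 : ℝ) ^ (j + 1)) * ((2 / 3 : ℝ) * τ)) • w (m + 1 + 1) := by
      have h := hrec (m + 1 + 1) (by omega) hm
      rw [show m + 1 + 1 - 1 = m + 1 by omega, show m + 1 + 1 - 2 = m by omega] at h
      rw [h, pow_succ]
      module
    have hpow : (1 / 3 : ℝ) ^ (j + (m + 1)) ≤ (1 / 3 : ℝ) ^ (j + 1) :=
      pow_le_pow_of_le_one (by norm_num) (by norm_num) (by omega)
    have hone : (1 / 3 : ℝ) ^ (j + 1) ≤ 1 := pow_le_one₀ (by norm_num) (by norm_num)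
    have hcoef : 0 ≤ (3 / 2 : ℝ) * (1 - (1 / 3 : ℝ) ^ (j + 1)) * ((2 / 3 : ℝ) * τ) :=
      mul_nonneg (by linarith) (by positivity)
    have hlast : (3 / 2 : ℝ) * (1 - (1 / 3 : ℝ) ^ (j + 1)) * ((2 / 3 : ℝ) * τ) * ‖w (m + 1 + 1)‖
        ≤ (3 / 2 : ℝ) * (1 - (1 / 3 : ℝ) ^ (j + (m + 1))) * ((2 / 3 : ℝ) * τ)
          * ‖w (m + 1 + 1)‖ := by
      gcongr
    have hprev := ih (j + 1) (by omega)
    rw [show j + 1 + m = j + (m + 1) by omega] at hprev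
    have htri := norm_add_le
      (u (m + 1) + ((1 - (1 / 3 : ℝ) ^ (j + 1)) / 2) • (u (m + 1) - u m))
      (((3 / 2 : ℝ) * (1 - (1 / 3 : ℝ) ^ (j + 1)) * ((2 / 3 : ℝ) * τ)) • w (m + 1 + 1))
    rw [norm_smul, Real.norm_of_nonneg hcoef] at htri
    rw [hstep, Finset.sum_Icc_succ_top (by omega)]
    linarith

/-- Norm bound for the double-step (BDF2) recurrence
`u_n = (2/3)(τ w_n + 2u_{n−1} − (1/2)u_{n−2})` in a real normed space: with
`S̄_m = (2/3) τ Σ_{k=2}^m ‖w_k‖`, for every `2 ≤ n ≤ N`,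
`‖u_n‖ ≤ (3/2)(1 − (1/3)^{n−1}) S̄_n + (1/2)(3 − (1/3)^{n−1})‖u_1‖
 + (1/2)(1 − (1/3)^{n−1})‖u_0‖`. -/
theorem bdf2_norm_bound
    {X : Type*} [NormedAddCommGroup X] [NormedSpace ℝ X]
    (τ : ℝ) (hτ : 0 < τ) (N : ℕ) (hN : 2 ≤ N) (u w : ℕ → X) (Sbar : ℕ → ℝ)
    (hrec : ∀ n, 2 ≤ n → n ≤ N →
      u n = (2 / 3 : ℝ) • (τ • w n + (2 : ℝ) • u (n - 1) - (1 / 2 : ℝ) • u (n - 2)))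
    (hS : ∀ m, 2 ≤ m → m ≤ N →
      Sbar m = (2 / 3 : ℝ) * τ * ∑ k ∈ Finset.Icc 2 m, ‖w k‖) :
    ∀ n, 2 ≤ n → n ≤ N →
      ‖u n‖ ≤ (3 / 2 : ℝ) * (1 - (1 / 3 : ℝ) ^ (n - 1)) * Sbar n
          + (1 / 2 : ℝ) * (3 - (1 / 3 : ℝ) ^ (n - 1)) * ‖u 1‖
          + (1 / 2 : ℝ) * (1 - (1 / 3 : ℝ) ^ (n - 1)) * ‖u 0‖ := by
  intro n hn hnN
  obtain ⟨m, rfl⟩ : ∃ m, n = m + 1 := ⟨n - 1, by omega⟩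
  have h := bdf2_descent τ hτ N u w hrec m 0 hnN
  rw [← hS (m + 1) hn hnN] at h
  simp only [pow_zero, sub_self, zero_div, zero_smul, add_zero, zero_add] at h
  rw [Nat.add_sub_cancel]
  have hone : (1 / 3 : ℝ) ^ m ≤ 1 := pow_le_one₀ (by norm_num) (by norm_num)
  have hsplit : u 1 + ((1 - (1 / 3 : ℝ) ^ m) / 2) • (u 1 - u 0)
      = ((1 / 2 : ℝ) * (3 - (1 / 3 : ℝ) ^ m)) • u 1
        - ((1 / 2 : ℝ) * (1 - (1 / 3 : ℝ) ^ m)) • u 0 := by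
    module
  have htri := norm_sub_le (((1 / 2 : ℝ) * (3 - (1 / 3 : ℝ) ^ m)) • u 1)
    (((1 / 2 : ℝ) * (1 - (1 / 3 : ℝ) ^ m)) • u 0)
  rw [norm_smul, norm_smul, Real.norm_of_nonneg (by linarith),
    Real.norm_of_nonneg (by linarith)] at htri
  rw [hsplit] at h
  linarith
end

section
/- Let V and U be real normed spaces, H a real Hilbert space, i : V → H and ι : V → U continuous linear operators; write |v| = ‖i v‖_H. Let α > 0, β ≥ 0, d > 0, τ > 0, ε > 0, c̄ > 0. Let A : V → V* be a map with ⟨Av, v⟩ ≥ α‖v‖² − β|v|² for all v ∈ V, let B : V → V* be a continuous linear operator with ⟨Bv, v⟩ ≥ 0 for all v ∈ V, and assume ‖ι v‖_U² ≤ ε‖v‖² + c̄ |v|² for all v ∈ V. Then for every v ∈ V and every ξ ∈ U* with ‖ξ‖_{U*} ≤ d(1 + ‖ι v‖_U): (i v, i v)_H + τ ⟨Av, v⟩ + τ² ⟨Bv, v⟩ + τ ⟨ξ, ι v⟩ ≥ (1 − τβ − τ(1/2 + d) c̄) |v|² + τ (α − (1/2 + d) ε) ‖v‖² − (1/2) τ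 d². -/
/-!
The only term not bounded directly by a hypothesis is `⟨ξ, ι v⟩`. With `s = ‖ι v‖`, the growth
bound on `ξ` gives `⟨ξ, ι v⟩ ≥ -d s - d s²`, and Young's inequality `d s ≤ d² / 2 + s² / 2` turns
this into `⟨ξ, ι v⟩ ≥ -(1/2 + d) s² - d² / 2`. Bounding `s²` by `ε ‖v‖² + cbar ‖i v‖²`, adding the
coercivity of `A`, multiplying by `τ`, and discarding the nonnegative `B` term gives the estimate.
-/

open scoped RealInnerProductSpace

/-- Coercivity estimate for the operator `T₀ v = i* i v + τ A v + τ B (τ v) + τ ι* ξ` of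
the double-step Rothe scheme. -/
theorem rothe_operator_coercivity
    {V U H : Type*}
    [NormedAddCommGroup V] [NormedSpace ℝ V]
    [NormedAddCommGroup U] [NormedSpace ℝ U]
    [NormedAddCommGroup H] [InnerProductSpace ℝ H]
    (i : V →L[ℝ] H) (ι : V →L[ℝ] U)
    (α β d τ ε cbar : ℝ)
    (hα : 0 < α) (hβ : 0 ≤ β) (hd : 0 < d) (hτ : 0 < τ) (hε : 0 < ε) (hcbar : 0 < cbar)
    (A : V → V →L[ℝ] ℝ)
    (hA : ∀ v : V, A v v ≥ α * ‖v‖ ^ 2 - β * ‖i v‖ ^ 2)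
    (B : V →L[ℝ] V →L[ℝ] ℝ)
    (hB : ∀ v : V, 0 ≤ B v v)
    (hι : ∀ v : V, ‖ι v‖ ^ 2 ≤ ε * ‖v‖ ^ 2 + cbar * ‖i v‖ ^ 2)
    (v : V) (ξ : U →L[ℝ] ℝ)
    (hξ : ‖ξ‖ ≤ d * (1 + ‖ι v‖)) :
    ⟪i v, i v⟫ + τ * A v v + τ ^ 2 * B v v + τ * ξ (ι v) ≥
      (1 - τ * β - τ * (1 / 2 + d) * cbar) * ‖i v‖ ^ 2
        + τ * (α - (1 / 2 + d) * ε) * ‖v‖ ^ 2 - (1 / 2) * τ * d ^ 2 := by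
  have hpair : -(‖ξ‖ * ‖ι v‖) ≤ ξ (ι v) :=
    (abs_le.mp (by simpa only [Real.norm_eq_abs] using ξ.le_opNorm (ι v))).1
  have hmul : ‖ξ‖ * ‖ι v‖ ≤ d * (1 + ‖ι v‖) * ‖ι v‖ :=
    mul_le_mul_of_nonneg_right hξ (norm_nonneg _)
  -- Young's inequality `d s ≤ d² / 2 + s² / 2` with `s = ‖ι v‖` absorbs the linear term.
  have hyoung : -((1 / 2 + d) * ‖ι v‖ ^ 2) - 1 / 2 * d ^ 2 ≤ ξ (ι v) := by
    nlinarith [sq_nonneg (d - ‖ι v‖)]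
  have htrace : (1 / 2 + d) * ‖ι v‖ ^ 2
      ≤ (1 / 2 + d) * (ε * ‖v‖ ^ 2 + cbar * ‖i v‖ ^ 2) :=
    mul_le_mul_of_nonneg_left (hι v) (by positivity)
  have hsum : α * ‖v‖ ^ 2 - β * ‖i v‖ ^ 2
      - (1 / 2 + d) * (ε * ‖v‖ ^ 2 + cbar * ‖i v‖ ^ 2) - 1 / 2 * d ^ 2
      ≤ A v v + ξ (ι v) := by
    linarith [hA v]
  have hscaled := mul_le_mul_of_nonneg_left hsum hτ.le
  have hBv : 0 ≤ τ ^ 2 * B v v := mul_nonneg (sq_nonneg τ) (hB v)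
  rw [real_inner_self_eq_norm_sq]
  linarith
end

section
/- Let V and U be real normed spaces, H a real Hilbert space, i : V → H and ι : V → U continuous linear operators; write |v| = ‖i v‖_H and (·,·) for the inner product of H. Let α > 0, β ≥ 0, d > 0, τ > 0, ε > 0, c̄ > 0. Let A : V → V* satisfy ⟨Av, v⟩ ≥ α‖v‖² − β|v|² for all v ∈ V; let B : V → V* be a continuous linear operator that is symmetric (⟨Bx, y⟩ = ⟨By, x⟩) and positive (⟨Bv, v⟩ ≥ 0); assume ‖ι v‖_U² ≤ ε‖v‖² + c̄|v|² for all v ∈ V. Let w_n, w_{n−1}, w_{n−2}, u_{n−1}, u_{n−2} ∈ V, f_n ∈ V*, and ξ_n ∈ U* with ‖ξ_n‖_{U*} ≤ d(1 + ‖ι w_n‖_U). Set u_n = (2/3)(τ w_n + 2u_{n−1} − (1/2)u_{n−2}) and suppose that for all v ∈ V: (1/τ)((3/2) i w_n − 2 i w_{n−1} + (1/2) i w_{n−2}, i v) + ⟨A w_n, v⟩ + ⟨B u_n, v⟩ + ⟨ξ_n, ι v⟩ = ⟨f_n, v⟩. Then: (1/4)|w_n|² + (1/4)|2w_n − w_{n−1}|²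 + (1/4)|w_n − 2w_{n−1} + w_{n−2}|² + (1/4)⟨B u_n, u_n⟩ + (1/4)⟨B(2u_n − u_{n−1}), 2u_n − u_{n−1}⟩ + (1/4)⟨B(u_n − 2u_{n−1} + u_{n−2}), u_n − 2u_{n−1} + u_{n−2}⟩ + τ(α − (3/2 + d)ε)‖w_n‖² ≤ (1/4)|w_{n−1}|² + (1/4)|2w_{n−1} − w_{n−2}|² + (1/4)⟨B u_{n−1}, u_{n−1}⟩ + (1/4)⟨B(2u_{n−1} − u_{n−2}), 2u_{n−1} − u_{n−2}⟩ + τ(β + (1/2 + d)c̄)|w_n|² + (1/2)τ d² + (1/(4ε)) τ ‖f_n‖_{V*}². -/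
/-!
Test the equation with `v = wn` and multiply by `τ`. The polarization identity
`bdf2_identity` for symmetric bilinear forms applies twice: to the inner product of `H` along
`wn, wn1, wn2`, and to `B` along `un, un1, un2`, because the definition of `un` says precisely
that `τ wn = (3/2) un - 2 un1 + (1/2) un2`. The term `A wn wn` is bounded below by coercivity.
Young's inequality gives `⟨fn, wn⟩ ≤ ε ‖wn‖² + ‖fn‖² / (4ε)` and
`|⟨ξn, ι wn⟩| ≤ d²/2 + (1/2 + d) ‖ι wn‖²`, and the Ehrling-type estimate absorbs `‖ι wn‖²`.
-/

open scoped RealInnerProductSpace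

/-- The identity behind the G-stability of the two-step backward difference formula, for an
arbitrary symmetric bilinear form. -/
theorem bdf2_identity {E : Type*} [NormedAddCommGroup E] [NormedSpace ℝ E]
    (B : E →L[ℝ] E →L[ℝ] ℝ) (hB : ∀ x y : E, B x y = B y x) (a b c : E) :
    B ((3 / 2 : ℝ) • a - (2 : ℝ) • b + (1 / 2 : ℝ) • c) a
      = (1 / 4 : ℝ) * B a a + (1 / 4 : ℝ) * B ((2 : ℝ) • a - b) ((2 : ℝ) • a - b)
        + (1 / 4 : ℝ) * B (a - (2 : ℝ) • b + c) (a - (2 : ℝ) • b + c)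
        - (1 / 4 : ℝ) * B b b - (1 / 4 : ℝ) * B ((2 : ℝ) • b - c) ((2 : ℝ) • b - c) := by
  simp only [map_add, map_sub, map_smul, add_apply, sub_apply, smul_apply, smul_eq_mul]
  rw [hB b a, hB c a, hB c b]
  ring

/-- One-step discrete energy inequality for the double-step Rothe scheme. Here `V*` and
`U*` are realized as spaces of continuous linear functionals, `|v| = ‖i v‖` and the growth
bound on `ξn` replaces `ξn ∈ ∂j(ι wn)`. -/
theorem rothe_one_step_energy_inequality
    {V U H : Type*}
    [NormedAddCommGroup V] [NormedSpace ℝ V]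
    [NormedAddCommGroup U] [NormedSpace ℝ U]
    [NormedAddCommGroup H] [InnerProductSpace ℝ H]
    (i : V →L[ℝ] H) (ι : V →L[ℝ] U)
    (α β d τ ε cbar : ℝ)
    (hα : 0 < α) (hβ : 0 ≤ β) (hd : 0 < d) (hτ : 0 < τ) (hε : 0 < ε) (hcbar : 0 < cbar)
    (A : V → V →L[ℝ] ℝ)
    (hA : ∀ v : V, A v v ≥ α * ‖v‖ ^ 2 - β * ‖i v‖ ^ 2)
    (B : V →L[ℝ] V →L[ℝ] ℝ)
    (hBsym : ∀ x y : V, B x y = B y x)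
    (hBpos : ∀ v : V, 0 ≤ B v v)
    (hι : ∀ v : V, ‖ι v‖ ^ 2 ≤ ε * ‖v‖ ^ 2 + cbar * ‖i v‖ ^ 2)
    (wn wn1 wn2 un1 un2 un : V) (fn : V →L[ℝ] ℝ) (ξn : U →L[ℝ] ℝ)
    (hξ : ‖ξn‖ ≤ d * (1 + ‖ι wn‖))
    (hun : un = (2 / 3 : ℝ) • (τ • wn + (2 : ℝ) • un1 - (1 / 2 : ℝ) • un2))
    (heq : ∀ v : V,
      (1 / τ) * ⟪(3 / 2 : ℝ) • i wn - (2 : ℝ) • i wn1 + (1 / 2 : ℝ) • i wn2, i v⟫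
        + A wn v + B un v + ξn (ι v) = fn v) :
    (1 / 4 : ℝ) * ‖i wn‖ ^ 2
      + (1 / 4 : ℝ) * ‖(2 : ℝ) • i wn - i wn1‖ ^ 2
      + (1 / 4 : ℝ) * ‖i wn - (2 : ℝ) • i wn1 + i wn2‖ ^ 2
      + (1 / 4 : ℝ) * B un un
      + (1 / 4 : ℝ) * B ((2 : ℝ) • un - un1) ((2 : ℝ) • un - un1)
      + (1 / 4 : ℝ) * B (un - (2 : ℝ) • un1 + un2) (un - (2 : ℝ) • un1 + un2)
      + τ * (α - (3 / 2 + d) * ε) * ‖wn‖ ^ 2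
    ≤ (1 / 4 : ℝ) * ‖i wn1‖ ^ 2
      + (1 / 4 : ℝ) * ‖(2 : ℝ) • i wn1 - i wn2‖ ^ 2
      + (1 / 4 : ℝ) * B un1 un1
      + (1 / 4 : ℝ) * B ((2 : ℝ) • un1 - un2) ((2 : ℝ) • un1 - un2)
      + τ * (β + (1 / 2 + d) * cbar) * ‖i wn‖ ^ 2
      + (1 / 2 : ℝ) * τ * d ^ 2
      + (1 / (4 * ε)) * τ * ‖fn‖ ^ 2 := by
  -- Over `ℝ` the conjugation in the type of `innerSL` is the identity only up to unfolding.
  obtain ⟨J, hJ⟩ : ∃ J : H →L[ℝ] H →L[ℝ] ℝ, ∀ x y, J x y = ⟪x, y⟫ :=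
    ⟨innerSL ℝ, fun _ _ => rfl⟩
  have hw := bdf2_identity J (fun x y => by rw [hJ, hJ, real_inner_comm])
    (i wn) (i wn1) (i wn2)
  simp only [hJ, real_inner_self_eq_norm_sq] at hw
  have hu := bdf2_identity B hBsym un un1 un2
  have hτw : (3 / 2 : ℝ) • un - (2 : ℝ) • un1 + (1 / 2 : ℝ) • un2 = τ • wn := by
    rw [hun]; module
  rw [hτw, map_smul, smul_apply, smul_eq_mul, hBsym] at hu
  have hf : fn wn ≤ ε * ‖wn‖ ^ 2 + 1 / (4 * ε) * ‖fn‖ ^ 2 := by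
    have h1 : fn wn ≤ ‖fn‖ * ‖wn‖ := (le_abs_self _).trans (fn.le_opNorm wn)
    have h2 : ε * ‖wn‖ ^ 2 + 1 / (4 * ε) * ‖fn‖ ^ 2 - ‖fn‖ * ‖wn‖
        = 1 / (4 * ε) * (2 * ε * ‖wn‖ - ‖fn‖) ^ 2 := by
      field_simp
      ring
    have h3 : 0 ≤ 1 / (4 * ε) * (2 * ε * ‖wn‖ - ‖fn‖) ^ 2 := by positivity
    linarith
  have hξw : -ξn (ι wn)
      ≤ 1 / 2 * d ^ 2 + (1 / 2 + d) * (ε * ‖wn‖ ^ 2 + cbar * ‖i wn‖ ^ 2) := by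
    have h1 : -ξn (ι wn) ≤ ‖ξn‖ * ‖ι wn‖ := (neg_le_abs _).trans (ξn.le_opNorm _)
    have h2 : ‖ξn‖ * ‖ι wn‖ ≤ d * (1 + ‖ι wn‖) * ‖ι wn‖ := by gcongr
    have h3 : (1 / 2 + d) * ‖ι wn‖ ^ 2
        ≤ (1 / 2 + d) * (ε * ‖wn‖ ^ 2 + cbar * ‖i wn‖ ^ 2) := by
      gcongr
      exact hι wn
    linarith [sq_nonneg (d - ‖ι wn‖)]
  have htest : ⟪(3 / 2 : ℝ) • i wn - (2 : ℝ) • i wn1 + (1 / 2 : ℝ) • i wn2, i wn⟫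
      + τ * B un wn = τ * (fn wn - A wn wn - ξn (ι wn)) := by
    rw [← heq wn]
    field_simp
    ring
  have hbound := mul_le_mul_of_nonneg_left (add_le_add (add_le_add hf hξw) (hA wn)) hτ.le
  linarith
end
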